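/- Let X be a finite set with nonnegative distance d_X, ε > 0, δ ≥ 1, let G be a δ-spanner of X (edge weights agree with d_X and d_G(x,x') ≤ δ·d_X(x,x') for all x,x'), let π be a probability distribution on X and d_Q : X × X → ℝ. If a mechanism K is OptQL(π, (ε/δ)·d_G, d_Q) — i.e., K satisfies (ε/δ)·d_G-privacy and minimizes QL(·, π, d_Q) among all (ε/δ)·d_G-private mechanisms — then K satisfies ε·d_X-privacy and K is OptPriv(π, d_Q, d_Q, q) for q = QL(K, π, d_Q). -/

import Mathlib

variable {X : Type*}

/-- A mechanism on a finite set `X`: a row-stochastic matrix. -/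
def IsMechanism [Fintype X] (K : X → X → ℝ) : Prop :=
  (∀ x z, 0 ≤ K x z) ∧ ∀ x, ∑ z, K x z = 1

/-- `K` satisfies `d`-privacy. -/
def DPrivate (d : X → X → ℝ) (K : X → X → ℝ) : Prop :=
  ∀ x x' z, K x z ≤ Real.exp (d x x') * K x' z

/-- A prior distribution on `X`. -/
def IsPrior [Fintype X] (pr : X → ℝ) : Prop :=
  (∀ x, 0 ≤ pr x) ∧ ∑ x, pr x = 1

/-- Quality loss of mechanism `K` under prior `pr` and metric `d`. -/
def QL [Fintype X] (K : X → X → ℝ) (pr : X → ℝ) (d : X → X → ℝ) : ℝ :=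
  ∑ x, ∑ z, pr x * K x z * d x z

/-- Composition (matrix product) of a mechanism with a remapping. -/
def comp [Fintype X] (K H : X → X → ℝ) : X → X → ℝ :=
  fun x x' => ∑ z, K x z * H z x'

/-- Adversary's expected error: infimum of quality loss over all remappings. -/
noncomputable def AdvError [Fintype X] (K : X → X → ℝ) (pr : X → ℝ) (d : X → X → ℝ) : ℝ :=
  sInf {q | ∃ H, IsMechanism H ∧ QL (comp K H) pr d = q}

/-- `K` is d-private with minimal quality loss among d-private mechanisms. -/
def OptQL [Fintype X] (pr : X → ℝ) (d dQ : X → X → ℝ) (K : X → X → ℝ) : Prop :=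
  IsMechanism K ∧ DPrivate d K ∧
    ∀ K', IsMechanism K' → DPrivate d K' → QL K pr dQ ≤ QL K' pr dQ

/-- `K` has quality loss at most `q` and maximal adversary error among such mechanisms. -/
def OptPriv [Fintype X] (pr : X → ℝ) (dA dQ : X → X → ℝ) (q : ℝ) (K : X → X → ℝ) : Prop :=
  QL K pr dQ ≤ q ∧
    ∀ K', IsMechanism K' → QL K' pr dQ ≤ q → AdvError K' pr dA ≤ AdvError K pr dA

/-- A walk in the graph with edge relation `E` from `x` to `x'`. -/
def IsWalk (E : X → X → Prop) (x x' : X) (p : List X) : Prop :=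
  p.head? = some x ∧ p.getLast? = some x' ∧ p.Chain' E

/-- The total weight of a walk. -/
def walkWeight (w : X → X → ℝ) (p : List X) : ℝ :=
  ((p.zip p.tail).map fun e => w e.1 e.2).sum

/-- Shortest-path distance induced by a weighted graph. -/
noncomputable def graphDist (E : X → X → Prop) (w : X → X → ℝ) (x x' : X) : ℝ :=
  sInf {c | ∃ p : List X, IsWalk E x x' p ∧ walkWeight w p = c}

theorem aux_comp_mech [Fintype X] {K H : X → X → ℝ} (hK : IsMechanism K) (hH : IsMechanism H) :
    IsMechanism (comp K H) := by
  refine ⟨fun x z => Finset.sum_nonneg fun y _ => mul_nonneg (hK.1 x y) (hH.1 y z), fun x => ?_⟩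
  unfold comp
  rw [Finset.sum_comm]
  simp_rw [← Finset.mul_sum, hH.2, mul_one]
  exact hK.2 x

theorem aux_comp_priv [Fintype X] {d K H : X → X → ℝ} (hK : DPrivate d K) (hH : IsMechanism H) :
    DPrivate d (comp K H) := by
  intro x x' z
  unfold comp
  rw [Finset.mul_sum]
  refine Finset.sum_le_sum fun y _ => ?_
  rw [← mul_assoc]
  exact mul_le_mul_of_nonneg_right (hK x x' y) (hH.1 y z)

theorem aux_bdd [Fintype X] {M : X → X → ℝ} (hM : IsMechanism M) (pr : X → ℝ)
    (d : X → X → ℝ) : ∑ x, ∑ z, -|pr x * d x z| ≤ QL M pr d := by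
  refine Finset.sum_le_sum fun x _ => Finset.sum_le_sum fun z _ => ?_
  have h0 := hM.1 x z
  have h1 : M x z ≤ 1 := by
    rw [← hM.2 x]
    exact Finset.single_le_sum (fun y _ => hM.1 x y) (Finset.mem_univ z)
  have h2 := neg_abs_le (pr x * d x z)
  have h3 := abs_nonneg (pr x * d x z)
  have e : pr x * M x z * d x z = M x z * (pr x * d x z) := by ring
  rw [e]
  nlinarith [mul_le_mul_of_nonneg_left h2 h0, mul_nonneg (sub_nonneg.2 h1) h3]

theorem aux_id [Fintype X] : ∃ H : X → X → ℝ, IsMechanism H ∧ ∀ K : X → X → ℝ, comp K H = K := by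
  classical
  refine ⟨fun x y => if x = y then 1 else 0, ⟨fun x z => ?_, fun x => ?_⟩, fun K => ?_⟩
  · dsimp only
    split_ifs <;> norm_num
  · simp
  · funext x y
    simp [comp]

/-- a mechanism optimal for the spanner metric is ε·d_X-private and
OptPriv for `q = QL(K, pr, dQ)`. -/
theorem spanner_optQL_implies_optPriv [Fintype X] (dX : X → X → ℝ)
    (hnn : ∀ x x', 0 ≤ dX x x') (ε δ : ℝ) (hε : 0 < ε) (hδ : 1 ≤ δ)
    (E : X → X → Prop)
    (hspan : ∀ x x', graphDist E dX x x' ≤ δ * dX x x')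
    (pr : X → ℝ) (hpr : IsPrior pr) (dQ : X → X → ℝ)
    (K : X → X → ℝ)
    (hopt : OptQL pr (fun x x' => (ε / δ) * graphDist E dX x x') dQ K) :
    DPrivate (fun x x' => ε * dX x x') K ∧
      OptPriv pr dQ dQ (QL K pr dQ) K := by
  obtain ⟨hK, hP, hmin⟩ := hopt
  obtain ⟨I, hI, hcI⟩ := aux_id (X := X)
  have hδ0 : 0 < δ := by linarith
  refine ⟨fun x x' z => (hP x x' z).trans ?_, le_refl _, fun K' hK' hq => ?_⟩
  · refine mul_le_mul_of_nonneg_right (Real.exp_le_exp.2 ?_) (hK.1 x' z)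
    calc ε / δ * graphDist E dX x x' ≤ ε / δ * (δ * dX x x') :=
          mul_le_mul_of_nonneg_left (hspan x x') (by positivity)
      _ = ε * dX x x' := by field_simp
  · have h1 : AdvError K' pr dQ ≤ QL K' pr dQ := by
      refine csInf_le ⟨∑ x, ∑ z, -|pr x * dQ x z|, ?_⟩ ⟨I, hI, by rw [hcI]⟩
      rintro q ⟨H, hH, rfl⟩
      exact aux_bdd (aux_comp_mech hK' hH) pr dQ
    have h2 : QL K pr dQ ≤ AdvError K pr dQ := by
      refine le_csInf ⟨_, I, hI, rfl⟩ ?_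
      rintro q ⟨H, hH, rfl⟩
      exact hmin _ (aux_comp_mech hK hH) (aux_comp_priv hP hH)
    exact h1.trans (hq.trans h2)
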